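/- For 0 ≤ i, j ≤ d: Σ_{h=0}^d u_i(θ_{t+h})u_j(θ_{t+h})k*_h(W) = δ_{ij}·ν(W)·(k_i(W))^{−1}, and Σ_{h=0}^d u_h(θ_{t+i})u_h(θ_{t+j})k_h(W) = δ_{ij}·ν(W)·(k*_i(W))^{−1}. -/

import Mathlib

open Matrix
open scoped Classical

noncomputable section

/-- The full setup: a `Q`-polynomial distance-regular graph `Γ = (X,R)` of diameter `D ≥ 3`,
with adjacency matrix `A`, primitive idempotents `E_i`, eigenvalues `θ_i`,
Krein parameters `q^h_{ij}`, a fixed base vertex `x`, dual primitive idempotents `E*_i`,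
dual adjacency matrix `A*` and dual eigenvalues `θ*_i`. -/
structure TSetup (X : Type*) [Fintype X] [DecidableEq X] where
  G : SimpleGraph X
  hGconn : G.Connected
  D : ℕ
  hD3 : 3 ≤ D
  hDiamLe : ∀ y z : X, G.dist y z ≤ D
  hDiamEq : ∃ y z : X, G.dist y z = D
  p : ℕ → ℕ → ℕ → ℕ
  hDRG : ∀ h i j : ℕ, h ≤ D → i ≤ D → j ≤ D → ∀ y z : X, G.dist y z = h →
    Nat.card {w : X // G.dist y w = i ∧ G.dist z w = j} = p h i j
  A : Matrix X X ℂ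
  hA : ∀ y z : X, A y z = if G.Adj y z then 1 else 0
  E : ℕ → Matrix X X ℂ
  hEzero : ∀ i : ℕ, D < i → E i = 0
  hEsum : ∑ i ∈ Finset.range (D + 1), E i = 1
  hEidem : ∀ i j : ℕ, i ≤ D → j ≤ D → E i * E j = if i = j then E i else 0
  hEsymm : ∀ i : ℕ, (E i)ᵀ = E i
  hEreal : ∀ i : ℕ, (E i).map (starRingEnd ℂ) = E i
  hE0 : E 0 = (Fintype.card X : ℂ)⁻¹ • Matrix.of (fun _ _ => (1 : ℂ))
  θ : ℕ → ℝ
  hθinj : ∀ i j : ℕ, i ≤ D → j ≤ D → θ i = θ j → i = j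
  hAspec : A = ∑ i ∈ Finset.range (D + 1), (θ i : ℂ) • E i
  q : ℕ → ℕ → ℕ → ℝ
  hKrein : ∀ i j : ℕ, i ≤ D → j ≤ D →
    Matrix.hadamard (E i) (E j) =
      (Fintype.card X : ℂ)⁻¹ • ∑ h ∈ Finset.range (D + 1), (q h i j : ℂ) • E h
  hQpoly0 : ∀ h i j : ℕ, h ≤ D → i ≤ D → j ≤ D →
    (i + j < h ∨ h + j < i ∨ h + i < j) → q h i j = 0
  hQpoly1 : ∀ h i j : ℕ, h ≤ D → i ≤ D → j ≤ D →
    (h = i + j ∨ i = h + j ∨ j = h + i) → q h i j ≠ 0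
  x : X
  Estar : ℕ → Matrix X X ℂ
  hEstarzero : ∀ i : ℕ, D < i → Estar i = 0
  hEstar : ∀ i : ℕ, i ≤ D → ∀ y z : X,
    Estar i y z = if y = z ∧ G.dist x y = i then 1 else 0
  Astar : Matrix X X ℂ
  hAstar : ∀ y z : X, Astar y z = if y = z then (Fintype.card X : ℂ) * E 1 x y else 0
  θstar : ℕ → ℝ
  hθstarinj : ∀ i j : ℕ, i ≤ D → j ≤ D → θstar i = θstar j → i = j
  hAstarspec : Astar = ∑ i ∈ Finset.range (D + 1), (θstar i : ℂ) • Estar i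

variable {X : Type*} [Fintype X] [DecidableEq X]

/-- The Terwilliger algebra `T = T(x)`, generated by `A` and `A*`. -/
def TSetup.T (S : TSetup X) : Subalgebra ℂ (Matrix X X ℂ) :=
  Algebra.adjoin ℂ {S.A, S.Astar}

/-- A thin irreducible `T`-module `W` with endpoint `r`, dual endpoint `t` and diameter `d`,
where `E*_i W ≠ 0` iff `r ≤ i ≤ r + d` and `E_i W ≠ 0` iff `t ≤ i ≤ t + d`. -/
structure TMod (S : TSetup X) where
  W : Submodule ℂ (X → ℂ)
  hWinv : ∀ B ∈ S.T, ∀ w ∈ W, B *ᵥ w ∈ W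
  hWne : W ≠ ⊥
  hWirr : ∀ U : Submodule ℂ (X → ℂ), U ≤ W →
    (∀ B ∈ S.T, ∀ w ∈ U, B *ᵥ w ∈ U) → U = ⊥ ∨ U = W
  hthin : ∀ i : ℕ, Module.finrank ℂ (W.map (S.Estar i).mulVecLin) ≤ 1
  r : ℕ
  t : ℕ
  d : ℕ
  hr : ∀ i : ℕ, W.map (S.Estar i).mulVecLin ≠ ⊥ ↔ r ≤ i ∧ i ≤ r + d
  ht : ∀ i : ℕ, W.map (S.E i).mulVecLin ≠ ⊥ ↔ t ≤ i ∧ i ≤ t + d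

open Classical in
/-- The action of a matrix `B` on `W` (the restriction of `B` to `W`; defined to be `0`
if `B` does not leave `W` invariant). -/
def actW (S : TSetup X) (M : TMod S) (B : Matrix X X ℂ) : M.W →ₗ[ℂ] M.W :=
  if h : ∀ w ∈ M.W, B.mulVecLin w ∈ M.W then B.mulVecLin.restrict h else 0

/-- `tr_W(B)`: the trace of the action of `B` on `W`. -/
def trW (S : TSetup X) (M : TMod S) (B : Matrix X X ℂ) : ℂ :=
  LinearMap.trace ℂ M.W (actW S M B)

/-- `a_i(W) = tr_W(E*_{r+i} A)`. -/
def aW (S : TSetup X) (M : TMod S) (i : ℕ) : ℂ :=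
  trW S M (S.Estar (M.r + i) * S.A)

/-- `x_i(W) = tr_W(E*_{r+i} A E*_{r+i-1} A)`, with `x_0(W) = 0`. -/
def xW (S : TSetup X) (M : TMod S) (i : ℕ) : ℂ :=
  if i = 0 then 0 else trW S M (S.Estar (M.r + i) * S.A * S.Estar (M.r + i - 1) * S.A)

/-- `a*_i(W) = tr_W(E_{t+i} A*)`. -/
def astarW (S : TSetup X) (M : TMod S) (i : ℕ) : ℂ :=
  trW S M (S.E (M.t + i) * S.Astar)

/-- `x*_i(W) = tr_W(E_{t+i} A* E_{t+i-1} A*)`, with `x*_0(W) = 0`. -/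
def xstarW (S : TSetup X) (M : TMod S) (i : ℕ) : ℂ :=
  if i = 0 then 0 else trW S M (S.E (M.t + i) * S.Astar * S.E (M.t + i - 1) * S.Astar)

/-- The polynomials `p_i`: `p_0 = 1`, `p_{-1} = 0`,
`λ p_i = p_{i+1} + a_i(W) p_i + x_i(W) p_{i-1}`. -/
def pW (S : TSetup X) (M : TMod S) : ℕ → Polynomial ℂ
  | 0 => 1
  | 1 => Polynomial.X - Polynomial.C (aW S M 0)
  | (n + 2) =>
      (Polynomial.X - Polynomial.C (aW S M (n + 1))) * pW S M (n + 1)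
        - Polynomial.C (xW S M (n + 1)) * pW S M n

/-- The polynomials `p*_i`: `p*_0 = 1`, `p*_{-1} = 0`,
`λ p*_i = p*_{i+1} + a*_i(W) p*_i + x*_i(W) p*_{i-1}`. -/
def pstarW (S : TSetup X) (M : TMod S) : ℕ → Polynomial ℂ
  | 0 => 1
  | 1 => Polynomial.X - Polynomial.C (astarW S M 0)
  | (n + 2) =>
      (Polynomial.X - Polynomial.C (astarW S M (n + 1))) * pstarW S M (n + 1)
        - Polynomial.C (xstarW S M (n + 1)) * pstarW S M n

/-- The Hermitian inner product `⟨u,v⟩ = Σ_y u_y conj(v_y)` on `ℂ^X`. -/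
def herm (u v : X → ℂ) : ℂ := ∑ y, u y * (starRingEnd ℂ) (v y)

/-- `ν(W)`, the multiplicative inverse of `m_0(W) = tr_W(E_t E*_r)`. -/
def nuW (S : TSetup X) (M : TMod S) : ℂ :=
  (trW S M (S.E M.t * S.Estar M.r))⁻¹

/-- `k_i(W) = ν(W) m*_i(W)` where `m*_i(W) = tr_W(E*_{r+i} E_t)`. -/
def kW (S : TSetup X) (M : TMod S) (i : ℕ) : ℂ :=
  nuW S M * trW S M (S.Estar (M.r + i) * S.E M.t)

/-- `k*_i(W) = ν(W) m_i(W)` where `m_i(W) = tr_W(E_{t+i} E*_r)`. -/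
def kstarW (S : TSetup X) (M : TMod S) (i : ℕ) : ℂ :=
  nuW S M * trW S M (S.E (M.t + i) * S.Estar M.r)


/-- An abstract Leonard-type system: two operators with dual pairs of eigenbases. -/
structure LSys (V : Type*) [AddCommGroup V] [Module ℂ V] (d : ℕ) where
  A : V →ₗ[ℂ] V
  B : V →ₗ[ℂ] V
  f : ℕ → V
  g : ℕ → V
  φ : ℕ → V →ₗ[ℂ] ℂ
  γ : ℕ → V →ₗ[ℂ] ℂ
  θ : ℕ → ℂ
  σ : ℕ → ℂ
  hff : ∀ i ≤ d, ∀ j ≤ d, φ i (f j) = if i = j then 1 else 0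
  hf : ∀ y, ∑ i ∈ Finset.range (d + 1), φ i y • f i = y
  hgg : ∀ i ≤ d, ∀ j ≤ d, γ i (g j) = if i = j then 1 else 0
  hg : ∀ y, ∑ i ∈ Finset.range (d + 1), γ i y • g i = y
  hA : ∀ i ≤ d, A (g i) = θ i • g i
  hB : ∀ i ≤ d, B (f i) = σ i • f i
  tA : ∀ i ≤ d, ∀ j ≤ d, (i + 1 < j ∨ j + 1 < i) → φ i (A (f j)) = 0
  tB : ∀ i ≤ d, ∀ j ≤ d, (i + 1 < j ∨ j + 1 < i) → γ i (B (g j)) = 0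
  irr : ∀ U : Submodule ℂ V, (∀ u ∈ U, A u ∈ U) → (∀ u ∈ U, B u ∈ U) → U = ⊥ ∨ U = ⊤

namespace LSys

variable {V : Type*} [AddCommGroup V] [Module ℂ V] {d : ℕ}

def swap (L : LSys V d) : LSys V d where
  A := L.B
  B := L.A
  f := L.g
  g := L.f
  φ := L.γ
  γ := L.φ
  θ := L.σ
  σ := L.θ
  hff := L.hgg
  hf := L.hg
  hgg := L.hff
  hg := L.hf
  hA := L.hB
  hB := L.hA
  tA := L.tB
  tB := L.tA
  irr := fun U h1 h2 => L.irr U h2 h1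

def a (L : LSys V d) (i : ℕ) : ℂ := L.φ i (L.A (L.f i))
def b (L : LSys V d) (i : ℕ) : ℂ := L.φ (i + 1) (L.A (L.f i))
def c (L : LSys V d) (i : ℕ) : ℂ := L.φ i (L.A (L.f (i + 1)))

def pp (L : LSys V d) : ℕ → Polynomial ℂ
  | 0 => 1
  | 1 => Polynomial.X - Polynomial.C (L.a 0)
  | (n + 2) =>
      (Polynomial.X - Polynomial.C (L.a (n + 1))) * pp L (n + 1)
        - Polynomial.C (L.b n * L.c n) * pp L n

lemma expand (L : LSys V d) (ψ : V →ₗ[ℂ] ℂ) (y : V) :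
    ψ y = ∑ i ∈ Finset.range (d + 1), L.φ i y * ψ (L.f i) := by
  conv_lhs => rw [← L.hf y]
  simp

lemma phiB (L : LSys V d) {i : ℕ} (hi : i ≤ d) (y : V) : L.φ i (L.B y) = L.σ i * L.φ i y := by
  have h := L.expand (L.φ i ∘ₗ L.B) y
  simp only [LinearMap.comp_apply] at h
  rw [h, Finset.sum_eq_single i]
  · rw [L.hB i hi]; simp [L.hff i hi i hi]; ring
  · intro j hj hji
    have hj' : j ≤ d := by simpa [Nat.lt_succ_iff] using hj
    rw [L.hB j hj']; simp [L.hff i hi j hj', Ne.symm hji]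
  · intro h; exact absurd (Finset.mem_range.2 (by omega)) h

lemma gammaA (L : LSys V d) {i : ℕ} (hi : i ≤ d) (y : V) : L.γ i (L.A y) = L.θ i * L.γ i y :=
  L.swap.phiB hi y

lemma bad (L : LSys V d) (s : Finset ℕ) (i j : ℕ) (hi : i ≤ d) (hj : j ≤ d) (hi' : i ∈ s)
    (hj' : j ∉ s)
    (h : ∀ k ∈ s, k ≤ d → ∀ l ≤ d, l ∉ s → L.φ k (L.A (L.f l)) = 0) : False := by
  let U : Submodule ℂ V := ⨅ k ∈ s.filter (· ≤ d), LinearMap.ker (L.φ k)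
  have hU : ∀ u, u ∈ U ↔ ∀ k ∈ s, k ≤ d → L.φ k u = 0 := by
    intro u; simp [U, Submodule.mem_iInf]
  have hUA : ∀ u ∈ U, L.A u ∈ U := by
    intro u hu
    rw [hU] at hu ⊢
    intro k hk hkd
    have := L.expand (L.φ k ∘ₗ L.A) u
    simp only [LinearMap.comp_apply] at this
    rw [this]
    apply Finset.sum_eq_zero
    intro l hl
    have hl' : l ≤ d := by simpa [Nat.lt_succ_iff] using hl
    by_cases hls : l ∈ s
    · rw [hu l hls hl', zero_mul]
    · rw [h k hk hkd l hl' hls, mul_zero]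
  have hUB : ∀ u ∈ U, L.B u ∈ U := by
    intro u hu
    rw [hU] at hu ⊢
    intro k hk hkd
    rw [L.phiB hkd, hu k hk hkd, mul_zero]
  rcases L.irr U hUA hUB with h0 | h0
  · have : L.f j ∈ U := by
      rw [hU]; intro k hk hkd
      rw [L.hff k hkd j hj, if_neg]
      rintro rfl; exact hj' hk
    rw [h0, Submodule.mem_bot] at this
    have h1 := L.hff j hj j hj
    simp [this] at h1
  · have : L.f i ∈ U := by rw [h0]; trivial
    have := (hU _).1 this i hi' hi
    rw [L.hff i hi i hi] at this
    simp at this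

lemma b_ne (L : LSys V d) {i : ℕ} (hi : i < d) : L.b i ≠ 0 := by
  intro h0
  refine L.bad (Finset.Icc (i + 1) d) (i + 1) i (by omega) (by omega) (by simp; omega)
    (by simp) ?_
  intro k hk hkd l hl hls
  simp only [Finset.mem_Icc, not_and, not_le] at hk hls
  by_cases hh : k = i + 1 ∧ l = i
  · rw [hh.1, hh.2]; exact h0
  · exact L.tA k hkd l hl (by omega)

lemma c_ne (L : LSys V d) {i : ℕ} (hi : i < d) : L.c i ≠ 0 := by
  intro h0
  refine L.bad (Finset.range (i + 1)) i (i + 1) (by omega) (by omega) (by simp)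
    (by simp) ?_
  intro k hk hkd l hl hls
  simp only [Finset.mem_range, not_lt] at hk hls
  by_cases hh : k = i ∧ l = i + 1
  · rw [hh.1, hh.2]; exact h0
  · exact L.tA k hkd l hl (by omega)

def β (L : LSys V d) (i : ℕ) : ℂ := ∏ k ∈ Finset.range i, L.b k
def χ (L : LSys V d) (i : ℕ) : ℂ := ∏ k ∈ Finset.range i, L.c k

lemma β_ne (L : LSys V d) {i : ℕ} (hi : i ≤ d) : L.β i ≠ 0 := by
  apply Finset.prod_ne_zero_iff.2
  intro k hk
  rw [Finset.mem_range] at hk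
  exact L.b_ne (by omega)

lemma χ_ne (L : LSys V d) {i : ℕ} (hi : i ≤ d) : L.χ i ≠ 0 := by
  apply Finset.prod_ne_zero_iff.2
  intro k hk
  rw [Finset.mem_range] at hk
  exact L.c_ne (by omega)

/-- three-term recurrence for the row functionals of `A` in the basis `f` -/
lemma row0 (L : LSys V d) (hd : 0 < d) (y : V) :
    L.φ 0 (L.A y) = L.a 0 * L.φ 0 y + L.c 0 * L.φ 1 y := by
  have h := L.expand (L.φ 0 ∘ₗ L.A) y
  simp only [LinearMap.comp_apply] at h
  rw [h, ← Finset.sum_subset (s₁ := {0, 1})]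
  · rw [Finset.sum_pair (by omega)]; simp only [a, c]; ring
  · intro k; simp; omega
  · intro k hk hk'
    simp at hk hk'
    rw [L.tA 0 (by omega) k (by omega) (by omega), mul_zero]

lemma row (L : LSys V d) {i : ℕ} (hd : i + 1 < d) (y : V) :
    L.φ (i + 1) (L.A y) = L.b i * L.φ i y + L.a (i + 1) * L.φ (i + 1) y
      + L.c (i + 1) * L.φ (i + 2) y := by
  have h := L.expand (L.φ (i + 1) ∘ₗ L.A) y
  simp only [LinearMap.comp_apply] at h
  rw [h, ← Finset.sum_subset (s₁ := {i, i + 1, i + 2})]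
  · rw [Finset.sum_insert (by simp), Finset.sum_pair (by omega)]; simp only [a, b, c]; ring
  · intro k; simp; omega
  · intro k hk hk'
    simp at hk hk'
    rw [L.tA (i + 1) (by omega) k (by omega) (by omega), mul_zero]

lemma col0 (L : LSys V d) (hd : 0 < d) :
    L.A (L.f 0) = L.a 0 • L.f 0 + L.b 0 • L.f 1 := by
  conv_lhs => rw [← L.hf (L.A (L.f 0))]
  rw [← Finset.sum_subset (s₁ := {0, 1})]
  · rw [Finset.sum_pair (by omega)]; simp only [a, b]
  · intro k; simp; omega
  · intro k hk hk'
    simp at hk hk'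
    rw [L.tA k (by omega) 0 (by omega) (by omega), zero_smul]

lemma col (L : LSys V d) {i : ℕ} (hd : i + 1 < d) :
    L.A (L.f (i + 1)) = L.c i • L.f i + L.a (i + 1) • L.f (i + 1)
      + L.b (i + 1) • L.f (i + 2) := by
  conv_lhs => rw [← L.hf (L.A (L.f (i + 1)))]
  rw [← Finset.sum_subset (s₁ := {i, i + 1, i + 2})]
  · rw [Finset.sum_insert (by simp), Finset.sum_pair (by omega)]; simp only [a, b, c]; abel
  · intro k; simp; omega
  · intro k hk hk'
    simp at hk hk'
    rw [L.tA k (by omega) (i + 1) (by omega) (by omega), zero_smul]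

lemma phi_g (L : LSys V d) {h : ℕ} (hh : h ≤ d) : ∀ i ≤ d,
    (L.pp i).eval (L.θ h) * L.φ 0 (L.g h) = L.χ i * L.φ i (L.g h) := by
  intro i
  induction i using Nat.twoStepInduction with
  | zero => intro _; simp [pp, χ]
  | one =>
    intro hi
    have := L.row0 (by omega) (L.g h)
    rw [L.hA h hh] at this
    simp at this
    simp [pp, χ]
    linear_combination this
  | more n ih1 ih2 =>
    intro hi
    have h1 := ih1 (by omega)
    have h2 := ih2 (by omega)
    have := L.row (i := n) (by omega) (L.g h)
    rw [L.hA h hh] at this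
    simp only [map_smul, smul_eq_mul] at this
    have e1 : L.χ (n + 1) = L.χ n * L.c n := by simp [χ, Finset.prod_range_succ]
    have e2 : L.χ (n + 2) = L.χ n * L.c n * L.c (n + 1) := by simp [χ, Finset.prod_range_succ]
    simp only [pp, Polynomial.eval_sub, Polynomial.eval_mul, Polynomial.eval_X,
      Polynomial.eval_C]
    rw [e2]; rw [e1] at h2
    linear_combination (L.θ h - L.a (n + 1)) * h2 - L.b n * L.c n * h1 + L.χ n * L.c n * this

lemma gamma_f (L : LSys V d) {h : ℕ} (hh : h ≤ d) : ∀ i ≤ d,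
    (L.pp i).eval (L.θ h) * L.γ h (L.f 0) = L.β i * L.γ h (L.f i) := by
  intro i
  induction i using Nat.twoStepInduction with
  | zero => intro _; simp [pp, β]
  | one =>
    intro hi
    have := L.gammaA hh (L.f 0)
    rw [L.col0 (by omega)] at this
    simp at this
    simp [pp, β]
    linear_combination -this
  | more n ih1 ih2 =>
    intro hi
    have h1 := ih1 (by omega)
    have h2 := ih2 (by omega)
    have := L.gammaA hh (L.f (n + 1))
    rw [L.col (by omega)] at this
    simp only [map_smul, map_add, smul_eq_mul] at this
    have e1 : L.β (n + 1) = L.β n * L.b n := by simp [β, Finset.prod_range_succ]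
    have e2 : L.β (n + 2) = L.β n * L.b n * L.b (n + 1) := by simp [β, Finset.prod_range_succ]
    simp only [pp, Polynomial.eval_sub, Polynomial.eval_mul, Polynomial.eval_X,
      Polynomial.eval_C]
    rw [e2]; rw [e1] at h2
    linear_combination (L.θ h - L.a (n + 1)) * h2 - L.b n * L.c n * h1 - L.β n * L.b n * this

/-- `m_h = tr(G_h F_0)` -/
def m (L : LSys V d) (h : ℕ) : ℂ := L.φ 0 (L.g h) * L.γ h (L.f 0)

/-- `m*_i = tr(F_i G_0)` -/
def ms (L : LSys V d) (i : ℕ) : ℂ := L.φ i (L.g 0) * L.γ 0 (L.f i)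

lemma orth1 (L : LSys V d) {i j : ℕ} (hi : i ≤ d) (hj : j ≤ d) :
    ∑ h ∈ Finset.range (d + 1), (L.pp i).eval (L.θ h) * (L.pp j).eval (L.θ h) * L.m h
      = if i = j then L.χ i * L.β i else 0 := by
  have h := L.swap.expand (L.φ i) (L.f j)
  change _ = ∑ h ∈ Finset.range (d + 1), L.γ h (L.f j) * L.φ i (L.g h) at h
  rw [L.hff i hi j hj] at h
  have : ∀ h ∈ Finset.range (d + 1),
      (L.pp i).eval (L.θ h) * (L.pp j).eval (L.θ h) * L.m h
        = L.χ i * L.β j * (L.γ h (L.f j) * L.φ i (L.g h)) := by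
    intro h hh
    have hh' : h ≤ d := by simpa [Nat.lt_succ_iff] using hh
    have h1 := L.phi_g hh' i hi
    have h2 := L.gamma_f hh' j hj
    calc _ = ((L.pp i).eval (L.θ h) * L.φ 0 (L.g h)) *
            ((L.pp j).eval (L.θ h) * L.γ h (L.f 0)) := by rw [m]; ring
      _ = _ := by rw [h1, h2]; ring
  rw [Finset.sum_congr rfl this, ← Finset.mul_sum, ← h]
  split_ifs with hij
  · subst hij; ring
  · ring

lemma orth2 (L : LSys V d) {h l : ℕ} (hh : h ≤ d) (hl : l ≤ d) :
    (∑ i ∈ Finset.range (d + 1), (L.pp i).eval (L.θ h) * (L.pp i).eval (L.θ l)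
      / (L.χ i * L.β i)) * (L.γ h (L.f 0) * L.φ 0 (L.g l))
      = if h = l then 1 else 0 := by
  have e := L.expand (L.γ h) (L.g l)
  rw [L.hgg h hh l hl] at e
  rw [e, Finset.sum_mul]
  apply Finset.sum_congr rfl
  intro i hi
  have hi' : i ≤ d := by simpa [Nat.lt_succ_iff] using hi
  have h1 := L.phi_g hl i hi'
  have h2 := L.gamma_f hh i hi'
  have b0 := L.β_ne hi'
  have c0 := L.χ_ne hi'
  field_simp
  linear_combination (L.pp i).eval (L.θ h) * L.γ h (L.f 0) * h1 + L.χ i * L.φ i (L.g l) * h2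

lemma m_ne (L : LSys V d) {h : ℕ} (hh : h ≤ d) : L.m h ≠ 0 := by
  intro h0
  have := L.orth2 hh hh
  rw [mul_comm (L.γ h (L.f 0)), ← m, h0] at this
  simp at this

lemma ms_ne (L : LSys V d) {i : ℕ} (hi : i ≤ d) : L.ms i ≠ 0 := by
  have := L.swap.m_ne hi
  rwa [m, mul_comm] at this

lemma ms_eq (L : LSys V d) {i : ℕ} (hi : i ≤ d) :
    L.ms i = (L.pp i).eval (L.θ 0) ^ 2 * L.m 0 / (L.χ i * L.β i) := by
  have h1 := L.phi_g (Nat.zero_le d) i hi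
  have h2 := L.gamma_f (Nat.zero_le d) i hi
  have b0 := L.β_ne hi
  have c0 := L.χ_ne hi
  rw [eq_div_iff (mul_ne_zero c0 b0), ms, m]
  calc _ = (L.χ i * L.φ i (L.g 0)) * (L.β i * L.γ 0 (L.f i)) := by ring
    _ = _ := by rw [← h1, ← h2]; ring

lemma P_ne (L : LSys V d) {i : ℕ} (hi : i ≤ d) : (L.pp i).eval (L.θ 0) ≠ 0 := by
  intro h
  apply L.ms_ne hi
  rw [L.ms_eq hi, h]; simp

theorem main (L : LSys V d) (i : ℕ) (hi : i ≤ d) (j : ℕ) (hj : j ≤ d) :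
      (∑ h ∈ Finset.range (d + 1),
          ((L.pp i).eval (L.θ h) / (L.pp i).eval (L.θ 0))
            * ((L.pp j).eval (L.θ h) / (L.pp j).eval (L.θ 0))
            * ((L.m 0)⁻¹ * L.m h)) =
        (if i = j then 1 else 0) * (L.m 0)⁻¹ * ((L.m 0)⁻¹ * L.ms i)⁻¹ ∧
      (∑ h ∈ Finset.range (d + 1),
          ((L.pp h).eval (L.θ i) / (L.pp h).eval (L.θ 0))
            * ((L.pp h).eval (L.θ j) / (L.pp h).eval (L.θ 0))
            * ((L.m 0)⁻¹ * L.ms h)) =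
        (if i = j then 1 else 0) * (L.m 0)⁻¹ * ((L.m 0)⁻¹ * L.m i)⁻¹ := by
  have m0 := L.m_ne (Nat.zero_le d)
  constructor
  · have Pi := L.P_ne hi
    have Pj := L.P_ne hj
    have bi := L.β_ne hi
    have ci := L.χ_ne hi
    have := L.orth1 hi hj
    calc _ = (∑ h ∈ Finset.range (d + 1),
          (L.pp i).eval (L.θ h) * (L.pp j).eval (L.θ h) * L.m h) *
          ((L.m 0)⁻¹ / ((L.pp i).eval (L.θ 0) * (L.pp j).eval (L.θ 0))) := by
            rw [Finset.sum_mul]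
            apply Finset.sum_congr rfl
            intro h _
            field_simp
      _ = _ := by
        rw [this, L.ms_eq hi]
        split_ifs with hij
        · subst hij; field_simp
        · simp
  · have e := L.orth2 hi hj
    have e' : (∑ h ∈ Finset.range (d + 1),
          ((L.pp h).eval (L.θ i) / (L.pp h).eval (L.θ 0))
            * ((L.pp h).eval (L.θ j) / (L.pp h).eval (L.θ 0))
            * ((L.m 0)⁻¹ * L.ms h)) = ∑ h ∈ Finset.range (d + 1),
            (L.pp h).eval (L.θ i) * (L.pp h).eval (L.θ j) / (L.χ h * L.β h) := by
      apply Finset.sum_congr rfl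
      intro h hh
      have hh' : h ≤ d := by simpa [Nat.lt_succ_iff] using hh
      have P := L.P_ne hh'
      have bi := L.β_ne hh'
      have ci := L.χ_ne hh'
      rw [L.ms_eq hh']
      field_simp
    rw [e']
    have mi := L.m_ne hi
    have mj := L.m_ne hj
    have n1 : L.γ i (L.f 0) ≠ 0 := fun h => mi (by rw [m, h, mul_zero])
    have n2 : L.φ 0 (L.g j) ≠ 0 := fun h => mj (by rw [m, h, zero_mul])
    rw [eq_div_of_mul_eq (mul_ne_zero n1 n2) e]
    split_ifs with hij
    · subst hij
      have hm : L.γ i (L.f 0) * L.φ 0 (L.g i) = L.m i := by rw [m]; ring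
      rw [hm]
      field_simp
    · simp

end LSys

section Bridge

/-- Rank one projections adapted to a decomposition. -/
lemma exists_dual {V : Type*} [AddCommGroup V] [Module ℂ V] [FiniteDimensional ℂ V] (d : ℕ)
    (F : ℕ → V →ₗ[ℂ] V)
    (hF : ∀ i ≤ d, ∀ j ≤ d, ∀ y, F i (F j y) = if i = j then F i y else 0)
    (hs : ∀ y, ∑ i ∈ Finset.range (d + 1), F i y = y)
    (hn : ∀ i ≤ d, F i ≠ 0)
    (hr : Module.finrank ℂ V ≤ d + 1) :
    ∃ (f : ℕ → V) (φ : ℕ → V →ₗ[ℂ] ℂ),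
      (∀ i ≤ d, ∀ y, F i y = φ i y • f i) ∧
      (∀ i ≤ d, ∀ j ≤ d, φ i (f j) = if i = j then 1 else 0) ∧
      (∀ y, ∑ i ∈ Finset.range (d + 1), φ i y • f i = y) ∧ Module.finrank ℂ V = d + 1 := by
  have hex : ∀ i : Fin (d + 1), ∃ v, F i v ≠ 0 := by
    intro i
    by_contra hcon
    push Not at hcon
    exact hn i (by omega) (LinearMap.ext hcon)
  choose v hv using hex
  let e : Fin (d + 1) → V := fun i => F i (v i)
  have hFe : ∀ i j : Fin (d + 1), F i (e j) = if i = j then e i else 0 := by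
    intro i j
    simp only [e]
    rw [hF i (by omega) j (by omega)]
    by_cases h : i = j
    · subst h; simp
    · rw [if_neg h, if_neg (by simpa [Fin.ext_iff] using h)]
  have hli : LinearIndependent ℂ e := by
    rw [Fintype.linearIndependent_iff]
    intro c hc i
    have := congrArg (F i) hc
    simp [map_sum, hFe] at this
    rcases this with h | h
    · exact h
    · exact absurd h (hv i)
  have hcard : Fintype.card (Fin (d + 1)) = Module.finrank ℂ V := by
    have := hli.fintype_card_le_finrank
    simp only [Fintype.card_fin] at *
    omega
  let bs := basisOfLinearIndependentOfCardEqFinrank hli hcard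
  have hbs : ∀ i, bs i = e i := by intro i; simp [bs]
  have hexp : ∀ y, ∑ i, bs.coord i y • e i = y := by
    intro y
    conv_rhs => rw [← bs.sum_repr y]
    simp [hbs]
  refine ⟨fun i => if h : i < d + 1 then e ⟨i, h⟩ else 0,
    fun i => if h : i < d + 1 then bs.coord ⟨i, h⟩ else 0, ?_, ?_, ?_, ?_⟩
  · intro i hi y
    have hi' : i < d + 1 := by omega
    simp only [hi', dif_pos]
    have := congrArg (F i) (hexp y)
    rw [← this]
    have h2 : ∀ j, F i (e j) = if (⟨i, hi'⟩ : Fin (d + 1)) = j then e ⟨i, hi'⟩ else 0 :=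
      fun j => hFe ⟨i, hi'⟩ j
    simp [map_sum, h2]
  · intro i hi j hj
    have hi' : i < d + 1 := by omega
    have hj' : j < d + 1 := by omega
    simp only [hi', hj', dif_pos]
    rw [← hbs]
    simp [Finsupp.single_apply, eq_comm]
  · intro y
    rw [Finset.sum_range]
    conv_rhs => rw [← hexp y]
    apply Finset.sum_congr rfl
    intro i _
    simp only [i.2, dif_pos]
  · rw [← hcard]; simp

lemma spec_mem {X : Type*} [Fintype X] [DecidableEq X] (D : ℕ) (P : ℕ → Matrix X X ℂ)
    (th : ℕ → ℝ) (N : Matrix X X ℂ)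
    (hsum : ∑ i ∈ Finset.range (D + 1), P i = 1)
    (hid : ∀ i j : ℕ, i ≤ D → j ≤ D → P i * P j = if i = j then P i else 0)
    (hinj : ∀ i j : ℕ, i ≤ D → j ≤ D → th i = th j → i = j)
    (hN : N = ∑ i ∈ Finset.range (D + 1), (th i : ℂ) • P i) (i : ℕ) (hi : i ≤ D) :
    P i ∈ Algebra.adjoin ℂ {N} := by
  have hNP : ∀ j ≤ D, N * P j = (th j : ℂ) • P j := by
    intro j hj
    rw [hN, Finset.sum_mul, Finset.sum_eq_single j]
    · rw [Matrix.smul_mul, hid j j hj hj, if_pos rfl]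
    · intro k hk hkj
      rw [Matrix.smul_mul, hid k j (by simpa [Nat.lt_succ_iff] using hk) hj, if_neg hkj, smul_zero]
    · intro h; exact absurd (Finset.mem_range.2 (by omega)) h
  have hqP : ∀ (q : Polynomial ℂ), ∀ j ≤ D, Polynomial.aeval N q * P j = q.eval (th j : ℂ) • P j := by
    intro q j hj
    induction q using Polynomial.induction_on' with
    | add p q hp hq => rw [map_add, add_mul, hp, hq, Polynomial.eval_add, add_smul]
    | monomial n a =>
      have : ∀ n : ℕ, N ^ n * P j = (th j : ℂ) ^ n • P j := by
        intro n
        induction n with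
        | zero => simp
        | succ n ih =>
          rw [pow_succ, mul_assoc, hNP j hj, Matrix.mul_smul, ih, smul_smul, pow_succ, mul_comm]
      rw [Polynomial.aeval_monomial, mul_assoc, this, Polynomial.eval_monomial,
        ← Algebra.smul_def, smul_smul]
  have hinj' : Set.InjOn (fun j => (th j : ℂ)) (Finset.range (D + 1) : Set ℕ) := by
    intro a ha b hb hab
    simp only [Finset.coe_range, Set.mem_Iio] at ha hb
    exact hinj a b (by omega) (by omega) (by simpa using hab)
  have key : Polynomial.aeval N (Lagrange.basis (Finset.range (D + 1)) (fun j => (th j : ℂ)) i)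
      = P i := by
    rw [← mul_one (Polynomial.aeval N _), ← hsum, Finset.mul_sum, Finset.sum_eq_single i]
    · rw [hqP _ i hi, Lagrange.eval_basis_self hinj' (Finset.mem_range.2 (by omega)), one_smul]
    · intro j hj hji
      rw [hqP _ j (by simpa [Nat.lt_succ_iff] using hj),
        Lagrange.eval_basis_of_ne (v := fun j => (th j : ℂ)) (Ne.symm hji) hj, zero_smul]
    · intro h; exact absurd (Finset.mem_range.2 (by omega)) h
  rw [← key]
  exact Polynomial.aeval_mem_adjoin_singleton ℂ N

variable {X : Type*} [Fintype X] [DecidableEq X]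

lemma Estar_sum (S : TSetup X) : ∑ i ∈ Finset.range (S.D + 1), S.Estar i = 1 := by
  ext y z
  rw [Matrix.sum_apply, Finset.sum_congr rfl (fun i hi => S.hEstar i
    (by simpa [Nat.lt_succ_iff] using hi) y z)]
  by_cases h : y = z
  · subst h
    have := S.hDiamLe S.x y
    simp [this]
  · simp [h]

lemma Estar_diag (S : TSetup X) (i : ℕ) (hi : i ≤ S.D) :
    S.Estar i = Matrix.diagonal (fun y => if S.G.dist S.x y = i then 1 else 0) := by
  ext y z
  rw [S.hEstar i hi, Matrix.diagonal_apply]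
  by_cases h : y = z <;> simp [h]

lemma Estar_idem (S : TSetup X) (i j : ℕ) (hi : i ≤ S.D) (hj : j ≤ S.D) :
    S.Estar i * S.Estar j = if i = j then S.Estar i else 0 := by
  rw [Estar_diag S i hi, Estar_diag S j hj, Matrix.diagonal_mul_diagonal]
  split_ifs with h
  · subst h; congr 1; ext y; split_ifs <;> simp
  · rw [← Matrix.diagonal_zero]; congr 1; ext y
    split_ifs with h1 h2 <;> simp
    omega

lemma Estar_tri (S : TSetup X) (i j : ℕ) (hi : i ≤ S.D) (hj : j ≤ S.D)
    (h : i + 1 < j ∨ j + 1 < i) : S.Estar i * S.A * S.Estar j = 0 := by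
  rw [Estar_diag S i hi, Estar_diag S j hj]
  ext y z
  rw [Matrix.mul_diagonal, Matrix.diagonal_mul, S.hA]
  by_cases hadj : S.G.Adj y z
  · have h1 := S.hGconn.dist_triangle (u := S.x) (v := y) (w := z)
    have h2 := S.hGconn.dist_triangle (u := S.x) (v := z) (w := y)
    rw [SimpleGraph.dist_eq_one_iff_adj.2 hadj] at h1
    rw [SimpleGraph.dist_eq_one_iff_adj.2 hadj.symm] at h2
    split_ifs <;> simp
    omega
  · simp [hadj]

open scoped ComplexOrder in
lemma E_tri (S : TSetup X) (i j : ℕ) (hi : i ≤ S.D) (hj : j ≤ S.D)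
    (h : i + 1 < j ∨ j + 1 < i) : S.E i * S.Astar * S.E j = 0 := by
  have hD := S.hD3
  have hH : ∀ k, (S.E k)ᴴ = S.E k := by
    intro k
    have := S.hEreal k
    conv_rhs => rw [← this, ← S.hEsymm k]
    rfl
  have hAd : S.Astar = Matrix.diagonal (fun y => (Fintype.card X : ℂ) * S.E 1 S.x y) := by
    ext y z
    rw [S.hAstar, Matrix.diagonal_apply]
  have hAH : (S.Astar)ᴴ = S.Astar := by
    rw [hAd, Matrix.diagonal_conjTranspose]
    congr 1
    ext y
    have := congrFun (congrFun (S.hEreal 1) S.x) y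
    simp only [Matrix.map_apply] at this
    simp [this]
  have hK : S.E 1 * Matrix.hadamard (S.E i) (S.E j) * S.E 1 = 0 := by
    rw [S.hKrein i j hi hj, Matrix.mul_smul, Matrix.smul_mul, Finset.mul_sum, Finset.sum_mul,
      Finset.sum_eq_zero, smul_zero]
    intro k hk
    have hk' : k ≤ S.D := by simpa [Nat.lt_succ_iff] using hk
    rw [Matrix.mul_smul, Matrix.smul_mul, S.hEidem 1 k (by omega) hk']
    by_cases h1 : 1 = k
    · subst h1
      rw [S.hQpoly0 1 i j (by omega) hi hj (by omega)]
      simp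
    · simp [h1]
  have hKx := congrFun (congrFun hK S.x) S.x
  rw [← Matrix.trace_mul_conjTranspose_self_eq_zero_iff]
  have e1 : S.E i * S.Astar * S.E j * (S.E i * S.Astar * S.E j)ᴴ
      = S.E i * (S.Astar * S.E j * S.Astar * S.E i) := by
    rw [Matrix.conjTranspose_mul, Matrix.conjTranspose_mul, hH, hH, hAH]
    have := S.hEidem j j hj hj
    rw [if_pos rfl] at this
    calc _ = S.E i * (S.Astar * (S.E j * S.E j) * S.Astar * S.E i) := by
          simp only [Matrix.mul_assoc]
      _ = _ := by rw [this]
  have e2 : (S.Astar * S.E j * S.Astar * S.E i) * S.E i = S.Astar * S.E j * S.Astar * S.E i := by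
    have := S.hEidem i i hi hi
    rw [if_pos rfl] at this
    rw [Matrix.mul_assoc, this]
  rw [e1, Matrix.trace_mul_comm, e2]
  have hsy : ∀ k y z, S.E k y z = S.E k z y := fun k y z =>
    congrFun (congrFun (S.hEsymm k) z) y
  rw [Matrix.mul_apply] at hKx
  simp only [Matrix.mul_apply, Matrix.hadamard_apply, Matrix.zero_apply] at hKx
  have e3 : Matrix.trace (S.Astar * S.E j * S.Astar * S.E i) = (Fintype.card X : ℂ) ^ 2 *
      ∑ z, (∑ y, S.E 1 S.x y * (S.E i y z * S.E j y z)) * S.E 1 z S.x := by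
    rw [hAd, Matrix.trace, Finset.mul_sum]
    apply Finset.sum_congr rfl
    intro z _
    rw [Matrix.diag_apply, Matrix.mul_apply, Finset.sum_mul, Finset.mul_sum]
    apply Finset.sum_congr rfl
    intro y _
    rw [Matrix.mul_diagonal, Matrix.diagonal_mul, hsy j z y, hsy 1 z S.x]
    ring
  rw [e3, hKx, mul_zero]

lemma E_mem (S : TSetup X) (i : ℕ) : S.E i ∈ S.T := by
  by_cases hi : i ≤ S.D
  · exact Algebra.adjoin_mono (by simp)
      (spec_mem S.D S.E S.θ S.A S.hEsum S.hEidem S.hθinj S.hAspec i hi)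
  · rw [S.hEzero i (by omega)]; exact zero_mem _

lemma Estar_mem (S : TSetup X) (i : ℕ) : S.Estar i ∈ S.T := by
  by_cases hi : i ≤ S.D
  · exact Algebra.adjoin_mono (by simp)
      (spec_mem S.D S.Estar S.θstar S.Astar (Estar_sum S) (Estar_idem S) S.hθstarinj
        S.hAstarspec i hi)
  · rw [S.hEstarzero i (by omega)]; exact zero_mem _

lemma A_mem (S : TSetup X) : S.A ∈ S.T := Algebra.subset_adjoin (by simp)

lemma Astar_mem (S : TSetup X) : S.Astar ∈ S.T := Algebra.subset_adjoin (by simp)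

lemma act_apply (S : TSetup X) (M : TMod S) {B : Matrix X X ℂ} (hB : B ∈ S.T) (w : M.W) :
    (actW S M B w : X → ℂ) = B *ᵥ (w : X → ℂ) := by
  have h : ∀ w ∈ M.W, B.mulVecLin w ∈ M.W := fun w hw => M.hWinv B hB w hw
  rw [actW, dif_pos h]
  rfl

lemma act_mul (S : TSetup X) (M : TMod S) {B C : Matrix X X ℂ} (hB : B ∈ S.T) (hC : C ∈ S.T) :
    actW S M (B * C) = actW S M B * actW S M C := by
  ext1 w
  apply Subtype.ext
  rw [act_apply S M (mul_mem hB hC), Module.End.mul_apply, act_apply S M hB, act_apply S M hC,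
    Matrix.mulVec_mulVec]

lemma act_zero (S : TSetup X) (M : TMod S) : actW S M 0 = 0 := by
  ext1 w
  apply Subtype.ext
  rw [act_apply S M (zero_mem _)]
  simp

lemma act_smul (S : TSetup X) (M : TMod S) (a : ℂ) {B : Matrix X X ℂ} (hB : B ∈ S.T) :
    actW S M (a • B) = a • actW S M B := by
  ext1 w
  apply Subtype.ext
  rw [act_apply S M (Subalgebra.smul_mem _ hB a), LinearMap.smul_apply, Submodule.coe_smul,
    act_apply S M hB, Matrix.smul_mulVec]

lemma act_eq_zero_iff (S : TSetup X) (M : TMod S) {B : Matrix X X ℂ} (hB : B ∈ S.T) :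
    actW S M B = 0 ↔ M.W.map B.mulVecLin = ⊥ := by
  rw [Submodule.eq_bot_iff]
  constructor
  · rintro h _ ⟨w, hw, rfl⟩
    have := act_apply S M hB ⟨w, hw⟩
    rw [h] at this
    simpa using this.symm
  · intro h
    ext1 w
    apply Subtype.ext
    rw [act_apply S M hB]
    exact h _ ⟨w, w.2, rfl⟩

lemma dec (S : TSetup X) (M : TMod S) (P : ℕ → Matrix X X ℂ) (s : ℕ)
    (hT : ∀ i, P i ∈ S.T)
    (hz : ∀ i : ℕ, S.D < i → P i = 0)
    (hsum : ∑ i ∈ Finset.range (S.D + 1), P i = 1)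
    (hid : ∀ i j : ℕ, i ≤ S.D → j ≤ S.D → P i * P j = if i = j then P i else 0)
    (hr : ∀ i, M.W.map (P i).mulVecLin ≠ ⊥ ↔ s ≤ i ∧ i ≤ s + M.d) :
    s + M.d ≤ S.D ∧
    (∀ i ≤ M.d, ∀ j ≤ M.d, ∀ y, actW S M (P (s + i)) (actW S M (P (s + j)) y)
      = if i = j then actW S M (P (s + i)) y else 0) ∧
    (∀ y, ∑ i ∈ Finset.range (M.d + 1), actW S M (P (s + i)) y = y) ∧
    (∀ i ≤ M.d, actW S M (P (s + i)) ≠ 0) := by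
  have hne : ∀ i ≤ M.d, actW S M (P (s + i)) ≠ 0 := by
    intro i hi
    rw [Ne, act_eq_zero_iff S M (hT _)]
    exact (hr (s + i)).2 (by omega)
  have hle : s + M.d ≤ S.D := by
    by_contra hcon
    have := hne M.d le_rfl
    rw [hz _ (by omega), act_zero] at this
    exact this rfl
  refine ⟨hle, ?_, ?_, hne⟩
  · intro i hi j hj y
    rw [← Module.End.mul_apply, ← act_mul S M (hT _) (hT _), hid _ _ (by omega) (by omega)]
    by_cases h : i = j
    · simp [h]
    · rw [if_neg (by omega), if_neg h, act_zero]; rfl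
  · intro y
    have h1 : ∑ i ∈ Finset.range (S.D + 1), actW S M (P i) y = y := by
      apply Subtype.ext
      rw [AddSubmonoidClass.coe_finsetSum]
      rw [Finset.sum_congr rfl (fun i _ => act_apply S M (hT i) y), ← Matrix.sum_mulVec, hsum,
        Matrix.one_mulVec]
    refine Eq.trans ?_ h1
    symm
    rw [← Finset.sum_subset (s₁ := Finset.Ico s (s + M.d + 1))]
    · rw [Finset.sum_Ico_eq_sum_range]
      rw [show s + M.d + 1 - s = M.d + 1 by omega]
    · intro k; simp; omega
    · intro k _ hk
      simp only [Finset.mem_Ico, not_and] at hk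
      have : actW S M (P k) = 0 := by
        rw [act_eq_zero_iff S M (hT _)]
        by_contra hcon
        have := (hr k).1 hcon
        have := hk this.1
        omega
      rw [this]; rfl

lemma finrank_W_le (S : TSetup X) (M : TMod S)
    (hs : ∀ y, ∑ i ∈ Finset.range (M.d + 1), actW S M (S.Estar (M.r + i)) y = y) :
    Module.finrank ℂ M.W ≤ M.d + 1 := by
  let Φ : M.W →ₗ[ℂ] ((i : Fin (M.d + 1)) → M.W.map (S.Estar (M.r + i)).mulVecLin) :=
    LinearMap.pi (fun i => (S.Estar (M.r + i)).mulVecLin.submoduleMap M.W)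
  have hΦ : Function.Injective Φ := by
    rw [← LinearMap.ker_eq_bot, LinearMap.ker_eq_bot']
    intro w hw
    rw [← hs w]
    apply Finset.sum_eq_zero
    intro i hi
    apply Subtype.ext
    rw [act_apply S M (Estar_mem S _)]
    have := congrArg Subtype.val (congrFun hw ⟨i, Finset.mem_range.1 hi⟩)
    exact this
  have := LinearMap.finrank_le_finrank_of_injective hΦ
  rw [Module.finrank_pi_fintype] at this
  refine this.trans ((Finset.sum_le_sum (fun (i : Fin (M.d + 1)) _ => M.hthin (M.r + (i : ℕ)))).trans ?_)
  simp

lemma W_irr (S : TSetup X) (M : TMod S) (U : Submodule ℂ M.W)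
    (hA : ∀ u ∈ U, actW S M S.A u ∈ U) (hB : ∀ u ∈ U, actW S M S.Astar u ∈ U) :
    U = ⊥ ∨ U = ⊤ := by
  have key : ∀ B ∈ S.T, ∀ u ∈ U, actW S M B u ∈ U := by
    intro B hBT
    induction hBT using Algebra.adjoin_induction with
    | mem B hB' =>
      rcases hB' with rfl | rfl
      · exact hA
      · exact hB
    | algebraMap a =>
      intro u hu
      have : actW S M (algebraMap ℂ _ a) u = a • u := by
        apply Subtype.ext
        rw [act_apply S M (Subalgebra.algebraMap_mem _ a), Algebra.algebraMap_eq_smul_one,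
          Matrix.smul_mulVec, Matrix.one_mulVec]
        rfl
      rw [this]
      exact U.smul_mem a hu
    | add B C hB' hC' h1 h2 =>
      intro u hu
      have : actW S M (B + C) u = actW S M B u + actW S M C u := by
        apply Subtype.ext
        rw [act_apply S M (add_mem hB' hC'), Submodule.coe_add, act_apply S M hB',
          act_apply S M hC', Matrix.add_mulVec]
      rw [this]
      exact U.add_mem (h1 u hu) (h2 u hu)
    | mul B C hB' hC' h1 h2 =>
      intro u hu
      rw [act_mul S M hB' hC']
      exact h1 _ (h2 u hu)
  have hinj := Submodule.map_injective_of_injective (Submodule.subtype_injective M.W)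
  have hinv : ∀ B ∈ S.T, ∀ w ∈ U.map M.W.subtype, B *ᵥ w ∈ U.map M.W.subtype := by
    rintro B hBT _ ⟨u, hu, rfl⟩
    exact ⟨actW S M B u, key B hBT u hu, act_apply S M hBT u⟩
  rcases M.hWirr (U.map M.W.subtype) (Submodule.map_subtype_le _ _) hinv with h | h
  · left; apply hinj; rw [h, Submodule.map_bot]
  · right; apply hinj; rw [h, Submodule.map_subtype_top]

/-- The Leonard system attached to a thin irreducible module, with its traces. -/
lemma exists_LSys (S : TSetup X) (M : TMod S) : ∃ L : LSys M.W M.d,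
    (∀ h ≤ M.d, L.θ h = (S.θ (M.t + h) : ℂ)) ∧
    L.A = actW S M S.A ∧
    (∀ i ≤ M.d, ∀ y, actW S M (S.Estar (M.r + i)) y = L.φ i y • L.f i) ∧
    (∀ i ≤ M.d, ∀ y, actW S M (S.E (M.t + i)) y = L.γ i y • L.g i) := by
  obtain ⟨hrD, F1, F2, F3⟩ := dec S M S.Estar M.r (Estar_mem S) S.hEstarzero (Estar_sum S)
    (Estar_idem S) M.hr
  obtain ⟨htD, G1, G2, G3⟩ := dec S M S.E M.t (E_mem S) S.hEzero S.hEsum S.hEidem M.ht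
  have hfr := finrank_W_le S M F2
  obtain ⟨f, φ, f1, f2, f3, -⟩ := exists_dual M.d _ F1 F2 F3 hfr
  obtain ⟨g, γ, g1, g2, g3, -⟩ := exists_dual M.d _ G1 G2 G3 hfr
  have Ff : ∀ i ≤ M.d, actW S M (S.Estar (M.r + i)) (f i) = f i := by
    intro i hi; rw [f1 i hi, f2 i hi i hi]; simp
  have Gg : ∀ i ≤ M.d, actW S M (S.E (M.t + i)) (g i) = g i := by
    intro i hi; rw [g1 i hi, g2 i hi i hi]; simp
  have spec : ∀ (P : ℕ → Matrix X X ℂ) (th : ℕ → ℝ) (N : Matrix X X ℂ)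
      (_ : ∀ i j : ℕ, i ≤ S.D → j ≤ S.D → P i * P j = if i = j then P i else 0)
      (_ : N = ∑ i ∈ Finset.range (S.D + 1), (th i : ℂ) • P i) (j : ℕ) (_ : j ≤ S.D),
      N * P j = (th j : ℂ) • P j := by
    intro P th N hid hN j hj
    rw [hN, Finset.sum_mul, Finset.sum_eq_single j]
    · rw [Matrix.smul_mul, hid j j hj hj, if_pos rfl]
    · intro k hk hkj
      rw [Matrix.smul_mul, hid k j (by simpa [Nat.lt_succ_iff] using hk) hj, if_neg hkj, smul_zero]
    · intro h; exact absurd (Finset.mem_range.2 (by omega)) h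
  refine ⟨{ A := actW S M S.A, B := actW S M S.Astar, f := f, g := g, φ := φ, γ := γ,
            θ := fun h => (S.θ (M.t + h) : ℂ), σ := fun h => (S.θstar (M.r + h) : ℂ),
            hff := f2, hf := f3, hgg := g2, hg := g3, hA := ?_, hB := ?_, tA := ?_, tB := ?_,
            irr := W_irr S M }, fun _ _ => rfl, rfl, f1, g1⟩
  · intro i hi
    conv_lhs => rw [← Gg i hi]
    rw [← Module.End.mul_apply, ← act_mul S M (A_mem S) (E_mem S _),
      spec S.E S.θ S.A S.hEidem S.hAspec _ (by omega), act_smul S M _ (E_mem S _),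
      LinearMap.smul_apply, Gg i hi]
  · intro i hi
    conv_lhs => rw [← Ff i hi]
    rw [← Module.End.mul_apply, ← act_mul S M (Astar_mem S) (Estar_mem S _),
      spec S.Estar S.θstar S.Astar (Estar_idem S) S.hAstarspec _ (by omega),
      act_smul S M _ (Estar_mem S _), LinearMap.smul_apply, Ff i hi]
  · intro i hi j hj hij
    have h0 : actW S M (S.Estar (M.r + i)) (actW S M S.A (f j)) = 0 := by
      conv_lhs => rw [← Ff j hj]
      rw [← Module.End.mul_apply, ← Module.End.mul_apply, ← act_mul S M (Estar_mem S _) (A_mem S),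
        ← act_mul S M (mul_mem (Estar_mem S _) (A_mem S)) (Estar_mem S _),
        Estar_tri S _ _ (by omega) (by omega) (by omega), act_zero]
      rfl
    rw [f1 i hi] at h0
    have := congrArg (φ i) h0
    rw [map_smul, f2 i hi i hi] at this
    simpa using this
  · intro i hi j hj hij
    have h0 : actW S M (S.E (M.t + i)) (actW S M S.Astar (g j)) = 0 := by
      conv_lhs => rw [← Gg j hj]
      rw [← Module.End.mul_apply, ← Module.End.mul_apply, ← act_mul S M (E_mem S _) (Astar_mem S),
        ← act_mul S M (mul_mem (E_mem S _) (Astar_mem S)) (E_mem S _),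
        E_tri S _ _ (by omega) (by omega) (by omega), act_zero]
      rfl
    rw [g1 i hi] at h0
    have := congrArg (γ i) h0
    rw [map_smul, g2 i hi i hi] at this
    simpa using this

/-- trace of a rank one operator -/
lemma trace_rank_one {V : Type*} [AddCommGroup V] [Module ℂ V] [FiniteDimensional ℂ V]
    (Z : V →ₗ[ℂ] V) (ψ : V →ₗ[ℂ] ℂ) (v : V) (h : ∀ y, Z y = ψ y • v) :
    LinearMap.trace ℂ V Z = ψ v := by
  have : Z = ψ.smulRight v := by
    ext1 y
    rw [h y]; rfl
  rw [this, LinearMap.trace_smulRight]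

end Bridge

/-- Orthogonality relations for the polynomials `u_i = p_i / p_i(θ_t)`:
`Σ_h u_i(θ_{t+h}) u_j(θ_{t+h}) k*_h(W) = δ_{ij} ν(W) k_i(W)⁻¹` and
`Σ_h u_h(θ_{t+i}) u_h(θ_{t+j}) k_h(W) = δ_{ij} ν(W) k*_i(W)⁻¹`. -/
theorem stmt17 (S : TSetup X) (M : TMod S) (hd : 0 < M.d) :
    ∀ i ≤ M.d, ∀ j ≤ M.d,
      (∑ h ∈ Finset.range (M.d + 1),
          ((pW S M i).eval ((S.θ (M.t + h) : ℂ)) / (pW S M i).eval ((S.θ M.t : ℂ)))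
            * ((pW S M j).eval ((S.θ (M.t + h) : ℂ)) / (pW S M j).eval ((S.θ M.t : ℂ)))
            * kstarW S M h) =
        (if i = j then 1 else 0) * nuW S M * (kW S M i)⁻¹ ∧
      (∑ h ∈ Finset.range (M.d + 1),
          ((pW S M h).eval ((S.θ (M.t + i) : ℂ)) / (pW S M h).eval ((S.θ M.t : ℂ)))
            * ((pW S M h).eval ((S.θ (M.t + j) : ℂ)) / (pW S M h).eval ((S.θ M.t : ℂ)))
            * kW S M h) =
        (if i = j then 1 else 0) * nuW S M * (kstarW S M i)⁻¹ := by
  intro i hi j hj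
  obtain ⟨L, hθ, hLA, hF, hG⟩ := exists_LSys S M
  have ha : ∀ i ≤ M.d, aW S M i = L.a i := by
    intro i hi
    rw [aW, trW, act_mul S M (Estar_mem S _) (A_mem S), ← hLA,
      trace_rank_one _ (L.φ i ∘ₗ L.A) (L.f i) (fun y => hF i hi _)]
    rfl
  have hx : ∀ n, n + 1 ≤ M.d → xW S M (n + 1) = L.b n * L.c n := by
    intro n hn
    have e : M.r + (n + 1) - 1 = M.r + n := by omega
    have hA' := A_mem S
    have hE' := Estar_mem S
    rw [xW, if_neg (by omega), trW, e, act_mul S M (mul_mem (mul_mem (hE' _) hA') (hE' _)) hA',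
      act_mul S M (mul_mem (hE' _) hA') (hE' _), act_mul S M (hE' _) hA', ← hLA,
      trace_rank_one _ (L.b n • (L.φ n ∘ₗ L.A)) (L.f (n + 1))]
    · rfl
    · intro y
      simp only [Module.End.mul_apply]
      rw [hF n (by omega), hF (n + 1) hn, map_smul, map_smul]
      simp only [LinearMap.smul_apply, LinearMap.comp_apply, smul_eq_mul, LSys.b]
      rw [mul_comm]
  have hp : ∀ n ≤ M.d, pW S M n = L.pp n := by
    intro n
    induction n using Nat.twoStepInduction with
    | zero => intro _; rfl
    | one => intro _; rw [pW, LSys.pp, ha 0 (by omega)]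
    | more n ih1 ih2 =>
      intro hn
      rw [pW, LSys.pp, ha (n + 1) (by omega), hx n (by omega), ih1 (by omega), ih2 (by omega)]
  have hm : ∀ h ≤ M.d, trW S M (S.E (M.t + h) * S.Estar M.r) = L.m h := by
    intro h hh
    rw [trW, act_mul S M (E_mem S _) (Estar_mem S _),
      trace_rank_one _ (L.γ h (L.f 0) • L.φ 0) (L.g h)]
    · simp [LSys.m, mul_comm]
    · intro y
      have := hF 0 (Nat.zero_le _) y
      rw [add_zero] at this
      rw [Module.End.mul_apply, this, hG h hh, map_smul]
      simp [mul_comm]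
  have hms : ∀ h ≤ M.d, trW S M (S.Estar (M.r + h) * S.E M.t) = L.ms h := by
    intro h hh
    rw [trW, act_mul S M (Estar_mem S _) (E_mem S _),
      trace_rank_one _ (L.φ h (L.g 0) • L.γ 0) (L.f h)]
    · simp [LSys.ms]
    · intro y
      have := hG 0 (Nat.zero_le _) y
      rw [add_zero] at this
      rw [Module.End.mul_apply, this, hF h hh, map_smul]
      simp [mul_comm]
  have hnu : nuW S M = (L.m 0)⁻¹ := by
    have := hm 0 (Nat.zero_le _)
    rw [add_zero] at this
    rw [nuW, this]
  have hks : ∀ h ≤ M.d, kstarW S M h = (L.m 0)⁻¹ * L.m h := by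
    intro h hh; rw [kstarW, hnu, hm h hh]
  have hk : ∀ h ≤ M.d, kW S M h = (L.m 0)⁻¹ * L.ms h := by
    intro h hh; rw [kW, hnu, hms h hh]
  have hθ0 : (S.θ M.t : ℂ) = L.θ 0 := by rw [hθ 0 (Nat.zero_le _), add_zero]
  obtain ⟨r1, r2⟩ := L.main i hi j hj
  constructor
  · rw [hnu, hk i hi, ← r1]
    apply Finset.sum_congr rfl
    intro h hh
    have hh' : h ≤ M.d := by simpa [Nat.lt_succ_iff] using hh
    rw [hp i hi, hp j hj, hks h hh', hθ0, hθ h hh']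
  · rw [hnu, hks i hi, ← r2]
    apply Finset.sum_congr rfl
    intro h hh
    have hh' : h ≤ M.d := by simpa [Nat.lt_succ_iff] using hh
    rw [hp h hh', hk h hh', hθ0, hθ i hi, hθ j hj]
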